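/- (Theorem 1, piecewise linearity and continuity in power capacity.) Fix S̄ and S0 with 0 ≤ S0 ≤ S̄, and define w(x̄) as the infimum of V(S) over feasible profiles. Then w is continuous and piecewise affine on [0, ∞): there exist finitely many breakpoints 0 = a₀ < a₁ < ⋯ < aₙ and coefficients cᵢ, dᵢ such that w(x̄) = cᵢ·x̄ + dᵢ on each interval [aᵢ, aᵢ₊₁] for i < n and w(x̄) = cₙ·x̄ + dₙ on [aₙ, ∞). -/

import Mathlib

/-!
Enlarging `xb` enlarges the feasible set, so the optimal value `w` is antitone. Contracting a
profile that is feasible for `yb` towards the constant profile `S0` by a factor `r` gives a profile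
feasible for `r * yb` with objective scaled by `r`, so `w (r * yb) ≤ r * w yb`. Since
`w x ≥ -T * x`, the two facts make `w` Lipschitz with constant `T`.

The feasible profiles form a compact polyhedron whose bounds are affine in `xb`, and the concave
objective attains its minimum at an extreme point of it. An extreme point is the unique solution of
its active constraints, hence an affine function of `xb` that depends only on which constraints are
active; the objective is moreover one of finitely many linear forms, according to which periods
discharge. So `w xb` is always the value at `xb` of one of finitely many affine functions. Distinct
affine functions agree at most at one point each, and between consecutive such points a continuous
function cannot switch from one to another.
-/

/-- Feasibility for the single-storage reliability-dispatch problem. -/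
def Feasible (T : ℕ) (pp pm : Fin T → ℝ) (S0 Sb xb : ℝ)
    (S : Fin (T + 1) → ℝ) : Prop :=
  S 0 = S0 ∧ ∀ t : Fin T,
    (0 ≤ S t.succ ∧ S t.succ ≤ Sb) ∧
    |S t.succ - S t.castSucc| ≤ xb ∧
    (-(pm t) ≤ S t.succ - S t.castSucc ∧ S t.succ - S t.castSucc ≤ pp t)

/-- The objective `V(S) = ∑ₜ min 0 (S (t+1) − S t)`. -/
noncomputable def V (T : ℕ) (S : Fin (T + 1) → ℝ) : ℝ :=
  ∑ t : Fin T, min 0 (S t.succ - S t.castSucc)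

open Set Topology

section Breakpoints

lemma exists_strictMono_breakpoints {α : Type*} [LinearOrder α] (x₀ : α) {B : Set α}
    (hB : B.Finite) :
    ∃ (n : ℕ) (a : Fin (n + 1) → α), a 0 = x₀ ∧ StrictMono a ∧
      (∀ i : Fin n, Disjoint (Ioo (a i.castSucc) (a i.succ)) B) ∧
      Disjoint (Ioi (a (Fin.last n))) B := by
  have hC : (insert x₀ (B ∩ Ioi x₀)).Finite := (hB.inter_of_left _).insert x₀
  obtain ⟨n, hn⟩ : ∃ n, hC.toFinset.card = n + 1 :=
    Nat.exists_eq_add_one.2 (Finset.card_pos.2 ⟨x₀, by simp⟩)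
  set a := hC.toFinset.orderEmbOfFin hn
  have hrange : range a = insert x₀ (B ∩ Ioi x₀) := by
    rw [Finset.range_orderEmbOfFin, hC.coe_toFinset]
  have hle : ∀ j, x₀ ≤ a j := fun j ↦ by
    obtain h | h : a j = x₀ ∨ a j ∈ B ∩ Ioi x₀ :=
      hrange.subset (mem_range_self j)
    exacts [h.ge, h.2.le]
  have hmem : ∀ {x j}, a j < x → x ∈ B → x ∈ range a := fun {x j} hx hxB ↦
    hrange.superset (Or.inr ⟨hxB, (hle j).trans_lt hx⟩)
  refine ⟨n, a, ?_, a.strictMono, fun i ↦ disjoint_left.2 ?_, disjoint_left.2 ?_⟩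
  · obtain ⟨j, hj⟩ : x₀ ∈ range a := hrange.superset (mem_insert _ _)
    exact le_antisymm (hj ▸ a.monotone (Fin.zero_le j)) (hle 0)
  · rintro x ⟨hlt, hgt⟩ hxB
    obtain ⟨j, rfl⟩ := hmem hlt hxB
    exact (Fin.castSucc_lt_iff_succ_le.1 (a.lt_iff_lt.1 hlt)).not_gt (a.lt_iff_lt.1 hgt)
  · intro x hlt hxB
    obtain ⟨j, rfl⟩ := hmem hlt hxB
    exact (Fin.le_last j).not_gt (a.lt_iff_lt.1 hlt)

lemma exists_eqOn_of_isPreconnected {X Y ι : Type*} [TopologicalSpace X] [TopologicalSpace Y]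
    [T2Space Y] [Finite ι] {s : Set X} (hs : IsPreconnected s) (hne : s.Nonempty) {f : X → Y}
    {g : ι → X → Y} (hf : ContinuousOn f s) (hg : ∀ i, ContinuousOn (g i) s)
    (hinj : ∀ x ∈ s, Function.Injective (g · x)) (hfg : ∀ x ∈ s, ∃ i, f x = g i x) :
    ∃ i, EqOn f (g i) s := by
  obtain ⟨x₀, hx₀⟩ := hne
  obtain ⟨i, hi⟩ := hfg x₀ hx₀
  have := isPreconnected_iff_preconnectedSpace.1 hs
  have hclosed : ∀ j, IsClosed {x : s | f x = g j x} := fun j ↦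
    isClosed_eq hf.domRestrict (hg j).domRestrict
  -- The agreement set with `g i` is open since its complement is a finite union of agreement sets.
  have hcompl : {x : s | f x = g i x}ᶜ = ⋃ j ∈ {j | j ≠ i}, {x : s | f x = g j x} := by
    ext x
    obtain ⟨j, hj⟩ := hfg x x.2
    have hunique : ∀ k, f x = g k x ↔ k = j := fun k ↦
      ⟨fun hk ↦ hinj x x.2 (hk.symm.trans hj), fun hk ↦ hk ▸ hj⟩
    simp [hunique, eq_comm]
  have hclopen : IsClopen {x : s | f x = g i x} :=
    ⟨hclosed i, isClosed_compl_iff.1 (hcompl ▸ (toFinite _).isClosed_biUnion fun j _ ↦ hclosed j)⟩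
  have huniv := hclopen.eq_univ ⟨⟨x₀, hx₀⟩, hi⟩
  exact ⟨i, fun x hx ↦ huniv.symm.subset (mem_univ (⟨x, hx⟩ : s))⟩

lemma affineMap_eq_of_eq_of_eq {k E P : Type*} [Field k] [AddCommGroup E] [Module k E]
    [AddTorsor E P] {g h : k →ᵃ[k] P} {x y : k} (hxy : x ≠ y) (hx : g x = h x) (hy : g y = h y) :
    g = h := by
  ext z
  have hz : AffineMap.lineMap x y ((z - x) / (y - x)) = z := by
    rw [AffineMap.lineMap_apply_ring']
    field_simp [sub_ne_zero.2 hxy.symm]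
    ring
  rw [← hz, AffineMap.apply_lineMap, AffineMap.apply_lineMap, hx, hy]

lemma finite_setOf_not_injOn_eval {k E P : Type*} [Field k] [AddCommGroup E] [Module k E]
    [AddTorsor E P] {F : Set (k →ᵃ[k] P)} (hF : F.Finite) :
    {x : k | ¬ InjOn (fun g : k →ᵃ[k] P ↦ g x) F}.Finite := by
  refine (hF.offDiag.biUnion fun p hp ↦ Subsingleton.finite (s := {x | p.1 x = p.2 x})
    fun x hx y hy ↦ ?_).subset fun x hx ↦ ?_
  · by_contra hxy
    exact hp.2.2 (affineMap_eq_of_eq_of_eq hxy hx hy)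
  · simp only [InjOn, mem_ofPred_eq, not_forall] at hx
    obtain ⟨g, hg, h, hh, heq, hgh⟩ := hx
    exact mem_biUnion (show (g, h) ∈ F.offDiag from ⟨hg, hh, hgh⟩) heq

lemma affineMap_apply_eq_mul_add {R : Type*} [CommRing R] (g : R →ᵃ[R] R) (x : R) :
    g x = g.linear 1 * x + g 0 := by
  have hlinear : g.linear 1 * x = g.linear x := by
    rw [mul_comm, ← smul_eq_mul, ← map_smul, smul_eq_mul, mul_one]
  rw [hlinear]
  exact congrFun g.decomp x

lemma exists_eqOn_affine {E : Type*} [NormedAddCommGroup E] [NormedSpace ℝ E] {f : ℝ → E}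
    {F : Set (ℝ →ᵃ[ℝ] E)} (hF : F.Finite) {s t : Set ℝ} (hs : IsPreconnected s) (hne : s.Nonempty)
    (hst : s ⊆ t) (hts : t ⊆ closure s) (hf : ContinuousOn f t)
    (hfF : ∀ x ∈ s, ∃ g ∈ F, f x = g x)
    (hdisj : Disjoint s {x : ℝ | ¬ InjOn (fun g : ℝ →ᵃ[ℝ] E ↦ g x) F}) :
    ∃ g : ℝ →ᵃ[ℝ] E, EqOn f g t := by
  have := hF.to_subtype
  have hcont : ∀ g : ℝ →ᵃ[ℝ] E, Continuous g := AffineMap.continuous_of_finiteDimensional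
  obtain ⟨g, hg⟩ := exists_eqOn_of_isPreconnected (g := fun g : F ↦ g) hs hne (hf.mono hst)
    (fun g ↦ (hcont g).continuousOn)
    (fun x hx ↦ injOn_iff_injective.1 (not_not.1 (disjoint_left.1 hdisj hx)))
    (fun x hx ↦ by simpa using hfF x hx)
  exact ⟨g, hg.of_subset_closure hf (hcont g).continuousOn hst hts⟩

theorem exists_affine_pieces_of_continuousOn {f : ℝ → ℝ} {x₀ : ℝ} (hf : ContinuousOn f (Ici x₀))
    {F : Set (ℝ →ᵃ[ℝ] ℝ)} (hF : F.Finite) (hfF : ∀ x ∈ Ici x₀, ∃ g ∈ F, f x = g x) :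
    ∃ (n : ℕ) (a c d : Fin (n + 1) → ℝ),
      a 0 = x₀ ∧ StrictMono a ∧
      (∀ i : Fin n, ∀ x ∈ Icc (a i.castSucc) (a i.succ), f x = c i.castSucc * x + d i.castSucc) ∧
      (∀ x ∈ Ici (a (Fin.last n)), f x = c (Fin.last n) * x + d (Fin.last n)) := by
  obtain ⟨n, a, ha₀, ha, hinner, houter⟩ :=
    exists_strictMono_breakpoints x₀ (finite_setOf_not_injOn_eval hF)
  have hle : ∀ i, x₀ ≤ a i := fun i ↦ ha₀ ▸ ha.monotone (Fin.zero_le i)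
  have hbounded : ∀ i : Fin n, ∃ g : ℝ →ᵃ[ℝ] ℝ, EqOn f g (Icc (a i.castSucc) (a i.succ)) :=
    fun i ↦ by
    have hlt : a i.castSucc < a i.succ := ha Fin.castSucc_lt_succ
    exact exists_eqOn_affine hF isPreconnected_Ioo (nonempty_Ioo.2 hlt) Ioo_subset_Icc_self
      (closure_Ioo hlt.ne).ge (hf.mono fun x hx ↦ (hle _).trans hx.1)
      (fun x hx ↦ hfF x ((hle _).trans hx.1.le)) (hinner i)
  obtain ⟨gLast, hgLast⟩ : ∃ g : ℝ →ᵃ[ℝ] ℝ, EqOn f g (Ici (a (Fin.last n))) :=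
    exists_eqOn_affine hF isPreconnected_Ioi nonempty_Ioi Ioi_subset_Ici_self
      (closure_Ioi _).ge (hf.mono (Ici_subset_Ici.2 (hle _)))
      (fun x hx ↦ hfF x ((hle _).trans (le_of_lt hx))) houter
  choose g hg using hbounded
  refine ⟨n, a, Fin.snoc (fun i ↦ (g i).linear 1) (gLast.linear 1),
    Fin.snoc (fun i ↦ g i 0) (gLast 0), ha₀, ha, fun i x hx ↦ ?_, fun x hx ↦ ?_⟩
  · rw [hg i hx, Fin.snoc_castSucc, Fin.snoc_castSucc, affineMap_apply_eq_mul_add]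
  · rw [hgLast hx, Fin.snoc_last, Fin.snoc_last, affineMap_apply_eq_mul_add]

end Breakpoints

section Polyhedron

lemma exists_extremePoint_isMinOn {E : Type*} [AddCommGroup E] [Module ℝ E] [TopologicalSpace E]
    [T2Space E] [IsTopologicalAddGroup E] [ContinuousSMul ℝ E] [LocallyConvexSpace ℝ E]
    {s : Set E} {f : E → ℝ} (hs : IsCompact s) (hne : s.Nonempty) (hcont : ContinuousOn f s)
    (hconc : ConcaveOn ℝ s f) : ∃ v ∈ s.extremePoints ℝ, IsMinOn f s v := by
  obtain ⟨v₀, hv₀, hmin⟩ := hs.exists_isMinOn hne hcont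
  have hcompact : IsCompact (s ∩ f ⁻¹' {f v₀}) :=
    hs.of_isClosed_subset (hcont.preimage_isClosed_of_isClosed hs.isClosed isClosed_singleton)
      inter_subset_left
  have hextreme : IsExtreme ℝ s (s ∩ f ⁻¹' {f v₀}) := by
    refine ⟨inter_subset_left, ?_⟩
    rintro x hx y hy _ ⟨-, hz⟩ ⟨a, b, ha, hb, hab, rfl⟩
    have hle : a * f x + b * f y ≤ f v₀ := (hconc.2 hx hy ha.le hb.le hab).trans_eq hz
    have hy' : b * f v₀ ≤ b * f y := mul_le_mul_of_nonneg_left (hmin hy) hb.le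
    refine ⟨hx, le_antisymm (le_of_mul_le_mul_left ?_ ha) (hmin hx)⟩
    linear_combination hle + hy' - f v₀ * hab
  obtain ⟨v, hv⟩ := hcompact.extremePoints_nonempty ⟨v₀, hv₀, rfl⟩
  have hfv : f v = f v₀ := hv.1.2
  exact ⟨v, hextreme.extremePoints_subset_extremePoints hv, fun w hw ↦ hfv.trans_le (hmin hw)⟩

variable {E ι : Type*} [AddCommGroup E] [Module ℝ E] {φ : ι → E →ₗ[ℝ] ℝ}

/-- The polyhedron cut out by two-sided bounds `l i ≤ φ i v ≤ u i` on a family of linear forms. An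
equality constraint is encoded by `l i = u i`. -/
def polyhedron (φ : ι → E →ₗ[ℝ] ℝ) (l u : ι → ℝ) : Set E :=
  {v | ∀ i, φ i v ∈ Icc (l i) (u i)}

lemma isClosed_polyhedron [TopologicalSpace E] (hφ : ∀ i, Continuous (φ i)) (l u : ι → ℝ) :
    IsClosed (polyhedron φ l u) := by
  simp only [polyhedron, ofPred_forall]
  exact isClosed_iInter fun i ↦ isClosed_Icc.preimage (hφ i)

lemma lineMap_mem_polyhedron {P M : Type*} [AddCommGroup M] [Module ℝ M] [AddTorsor M P]
    {l u : ι → P →ᵃ[ℝ] ℝ} {x y : P} {v w : E} (hv : v ∈ polyhedron φ (l · x) (u · x))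
    (hw : w ∈ polyhedron φ (l · y) (u · y)) {r : ℝ} (hr : r ∈ Icc (0 : ℝ) 1) :
    AffineMap.lineMap v w r ∈ polyhedron φ (l · (AffineMap.lineMap x y r))
      (u · (AffineMap.lineMap x y r)) := by
  intro i
  have hφ : φ i (AffineMap.lineMap v w r) = AffineMap.lineMap (φ i v) (φ i w) r :=
    (φ i).toAffineMap.apply_lineMap v w r
  simp only [hφ, AffineMap.apply_lineMap]
  exact ⟨lineMap_mono_endpoints (hv i).1 (hw i).1 hr.1 hr.2,
    lineMap_mono_endpoints (hv i).2 (hw i).2 hr.1 hr.2⟩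

lemma convex_polyhedron (φ : ι → E →ₗ[ℝ] ℝ) (l u : ι → ℝ) : Convex ℝ (polyhedron φ l u) := by
  simp only [polyhedron, ofPred_forall]
  exact convex_iInter fun i ↦ (convex_Icc _ _).linear_preimage (φ i)

-- Otherwise `v` could be moved both ways along `w`.
lemma eq_zero_of_mem_extremePoints_polyhedron [Finite ι] {l u : ι → ℝ} {v w : E}
    (hv : v ∈ (polyhedron φ l u).extremePoints ℝ)
    (hw : ∀ i, φ i v = l i ∨ φ i v = u i → φ i w = 0) : w = 0 := by
  have hnear : ∀ᶠ r in 𝓝 (0 : ℝ), v + r • w ∈ polyhedron φ l u := by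
    refine Filter.eventually_all.2 fun i ↦ ?_
    by_cases hi : φ i v = l i ∨ φ i v = u i
    · exact .of_forall fun r ↦ by simpa [hw i hi] using hv.1 i
    · have hslack : φ i v ∈ Ioo (l i) (u i) :=
        ⟨(hv.1 i).1.lt_of_ne' (not_or.1 hi).1, (hv.1 i).2.lt_of_ne (not_or.1 hi).2⟩
      have hlim : Filter.Tendsto (fun r : ℝ ↦ φ i (v + r • w)) (𝓝 0) (𝓝 (φ i v)) :=
        Continuous.tendsto' (by simp only [map_add, map_smul]; fun_prop) _ _ (by simp)
      exact hlim.eventually (Icc_mem_nhds hslack.1 hslack.2)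
  have hnear' : ∀ᶠ r in 𝓝 (0 : ℝ), v - r • w ∈ polyhedron φ l u := by
    have hneg : Filter.Tendsto (fun r : ℝ ↦ -r) (𝓝 0) (𝓝 0) :=
      Continuous.tendsto' continuous_neg _ _ neg_zero
    simpa [sub_eq_add_neg] using hneg.eventually hnear
  obtain ⟨r, ⟨hadd, hsub⟩, hr⟩ :=
    (((hnear.and hnear').filter_mono nhdsWithin_le_nhds).and
      (self_mem_nhdsWithin : Ioi (0 : ℝ) ∈ 𝓝[>] 0)).exists
  have heq : v - r • w = v := hv.2 hsub hadd (mem_openSegment_sub_add v (r • w))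
  exact (smul_eq_zero.1 (sub_eq_self.1 heq)).resolve_left (ne_of_gt hr)

variable {P M : Type*} [AddCommGroup M] [Module ℝ M] [AddTorsor M P] [Finite ι]

-- A set of active constraints that determines the point does so affinely in the bounds.
lemma exists_finite_affine_extremePoints_polyhedron (φ : ι → E →ₗ[ℝ] ℝ) (l u : ι → P →ᵃ[ℝ] ℝ) :
    ∃ G : Set (P →ᵃ[ℝ] E), G.Finite ∧
      ∀ x, ∀ v ∈ (polyhedron φ (l · x) (u · x)).extremePoints ℝ, ∃ g ∈ G, v = g x := by
  let active (I J : Set ι) : E →ₗ[ℝ] (I → ℝ) × (J → ℝ) :=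
    (LinearMap.pi fun i : I ↦ φ i).prod (LinearMap.pi fun j : J ↦ φ j)
  let bound (I J : Set ι) : P →ᵃ[ℝ] (I → ℝ) × (J → ℝ) :=
    (AffineMap.pi fun i : I ↦ l i).prod (AffineMap.pi fun j : J ↦ u j)
  refine ⟨range fun K : Set ι × Set ι ↦
    (active K.1 K.2).leftInverse.toAffineMap.comp (bound K.1 K.2), finite_range _,
    fun x v hv ↦ ?_⟩
  let I := {i | φ i v = l i x}
  let J := {i | φ i v = u i x}
  have hker : LinearMap.ker (active I J) = ⊥ := by
    refine LinearMap.ker_eq_bot'.2 fun w hw ↦ ?_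
    obtain ⟨hI, hJ⟩ := Prod.mk_eq_zero.1 hw
    refine eq_zero_of_mem_extremePoints_polyhedron hv fun i hi ↦ ?_
    rcases hi with hi | hi
    exacts [congrFun hI ⟨i, hi⟩, congrFun hJ ⟨i, hi⟩]
  have hbound : active I J v = bound I J x :=
    Prod.ext (funext fun i ↦ i.2) (funext fun j ↦ j.2)
  refine ⟨_, mem_range_self (I, J), ?_⟩
  calc v = (active I J).leftInverse (active I J v) :=
        (LinearMap.leftInverse_apply_of_inj hker v).symm
    _ = (active I J).leftInverse (bound I J x) := by rw [hbound]

theorem exists_finite_affine_isLeast_image_polyhedron [TopologicalSpace E] [T2Space E]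
    [IsTopologicalAddGroup E] [ContinuousSMul ℝ E] [LocallyConvexSpace ℝ E]
    (φ : ι → E →ₗ[ℝ] ℝ) (l u : ι → P →ᵃ[ℝ] ℝ) {f : E → ℝ} (hcont : Continuous f)
    (hconc : ConcaveOn ℝ univ f) {L : Set (E →ₗ[ℝ] ℝ)} (hL : L.Finite)
    (hfL : ∀ v, ∃ ℓ ∈ L, f v = ℓ v) :
    ∃ F : Set (P →ᵃ[ℝ] ℝ), F.Finite ∧ ∀ x, IsCompact (polyhedron φ (l · x) (u · x)) →
      (polyhedron φ (l · x) (u · x)).Nonempty →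
      ∃ g ∈ F, IsLeast (f '' polyhedron φ (l · x) (u · x)) (g x) := by
  obtain ⟨G, hG, hext⟩ := exists_finite_affine_extremePoints_polyhedron φ l u
  refine ⟨image2 (fun ℓ g ↦ ℓ.toAffineMap.comp g) L G, hL.image2 _ hG, fun x hcomp hne ↦ ?_⟩
  obtain ⟨v, hv, hmin⟩ := exists_extremePoint_isMinOn hcomp hne hcont.continuousOn
    (hconc.subset (subset_univ _) (convex_polyhedron _ _ _))
  obtain ⟨g, hg, rfl⟩ := hext x v hv
  obtain ⟨ℓ, hℓ, hfℓ⟩ := hfL (g x)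
  refine ⟨_, mem_image2_of_mem hℓ hg, ⟨g x, hv.1, hfℓ⟩, ?_⟩
  rintro _ ⟨w, hw, rfl⟩
  exact hfℓ.symm.trans_le (hmin hw)

end Polyhedron

lemma lipschitzOnWith_of_antitoneOn_of_smul_le {K : NNReal} {f : ℝ → ℝ}
    (hanti : AntitoneOn f (Ici 0)) (hlower : ∀ x ∈ Ici 0, -(K * x) ≤ f x)
    (hsmul : ∀ y ∈ Ici 0, ∀ r ∈ Icc (0 : ℝ) 1, f (r * y) ≤ r * f y) :
    LipschitzOnWith K f (Ici 0) := by
  refine LipschitzOnWith.of_le_add_mul K fun x hx y hy ↦ ?_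
  rw [Real.dist_eq]
  rcases le_total y x with hyx | hxy
  · exact (hanti hy hx hyx).trans (le_add_of_nonneg_right (by positivity))
  rcases (mem_Ici.1 hy).eq_or_lt with rfl | hy0
  · simp [le_antisymm hxy hx]
  calc f x = f (x / y * y) := by rw [div_mul_cancel₀ x hy0.ne']
    _ ≤ x / y * f y := hsmul y hy _ ⟨div_nonneg hx hy, div_le_one_of_le₀ hxy hy⟩
    _ = f y + (1 - x / y) * -f y := by ring
    _ ≤ f y + (1 - x / y) * (K * y) := by
      gcongr
      · exact sub_nonneg.2 (div_le_one_of_le₀ hxy hy)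
      · exact neg_le.1 (hlower y hy)
    _ = f y + K * (y - x) := by field_simp
    _ = f y + K * |x - y| := by rw [abs_sub_comm, abs_of_nonneg (sub_nonneg.2 hxy)]

section Dispatch

variable {T : ℕ} {pp pm : Fin T → ℝ} {S0 Sb : ℝ}

/-- The change of the state of charge during period `t`, as a linear form in the profile. -/
def increment (t : Fin T) : (Fin (T + 1) → ℝ) →ₗ[ℝ] ℝ :=
  .proj (φ := fun _ ↦ ℝ) t.succ - .proj t.castSucc

lemma V_eq_sum_increment (S : Fin (T + 1) → ℝ) : V T S = ∑ t, min 0 (increment t S) := rfl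

lemma continuous_V (T : ℕ) : Continuous (V T) := by
  unfold V
  fun_prop

lemma concaveOn_V (T : ℕ) : ConcaveOn ℝ univ (V T) := by
  refine ⟨convex_univ, fun S _ S' _ a b ha hb hab ↦ ?_⟩
  simp only [V_eq_sum_increment, Finset.smul_sum, ← Finset.sum_add_distrib]
  have hterm (t : Fin T) : ConcaveOn ℝ univ fun S ↦ min 0 (increment t S) :=
    (concaveOn_const 0 convex_univ).inf ((increment t).concaveOn convex_univ)
  exact Finset.sum_le_sum fun t _ ↦ (hterm t).2 (mem_univ S) (mem_univ S') ha hb hab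

lemma exists_V_eq_sum_increment (S : Fin (T + 1) → ℝ) :
    ∃ A : Finset (Fin T), V T S = (∑ t ∈ A, increment t) S := by
  refine ⟨Finset.univ.filter (increment · S < 0), ?_⟩
  rw [LinearMap.sum_apply, Finset.sum_filter, V_eq_sum_increment]
  refine Finset.sum_congr rfl fun t _ ↦ ?_
  split_ifs with h
  exacts [min_eq_right h.le, min_eq_left (not_lt.1 h)]

lemma V_lineMap_const (c : ℝ) (S : Fin (T + 1) → ℝ) {r : ℝ} (hr : 0 ≤ r) :
    V T (AffineMap.lineMap (Function.const _ c) S r) = r * V T S := by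
  simp only [V_eq_sum_increment, Finset.mul_sum, mul_min_of_nonneg _ _ hr, mul_zero]
  refine Finset.sum_congr rfl fun t _ ↦ congrArg (min 0) ?_
  have hconst : increment t (Function.const _ c) = 0 := sub_self c
  have happly : increment t (AffineMap.lineMap (Function.const _ c) S r) =
      AffineMap.lineMap (increment t (Function.const _ c)) (increment t S) r :=
    (increment t).toAffineMap.apply_lineMap _ _ r
  rw [happly, hconst, AffineMap.lineMap_apply_ring', sub_zero, add_zero]

/-- The linear forms constrained by `Feasible`: every state of charge, and every increment twice,
once for the power capacity and once for the surplus and deficiency. -/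
def dispatchForm : Fin (T + 1) ⊕ Fin T ⊕ Fin T → (Fin (T + 1) → ℝ) →ₗ[ℝ] ℝ :=
  Sum.elim LinearMap.proj (Sum.elim increment increment)

/-- The lower bounds on `dispatchForm`, as affine functions of the power capacity. -/
def dispatchLower (pm : Fin T → ℝ) (S0 : ℝ) : Fin (T + 1) ⊕ Fin T ⊕ Fin T → ℝ →ᵃ[ℝ] ℝ :=
  Sum.elim (Fin.cons (AffineMap.const ℝ ℝ S0) fun _ ↦ 0)
    (Sum.elim (fun _ ↦ -AffineMap.id ℝ ℝ) fun t ↦ AffineMap.const ℝ ℝ (-pm t))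

/-- The upper bounds on `dispatchForm`, as affine functions of the power capacity. -/
def dispatchUpper (pp : Fin T → ℝ) (S0 Sb : ℝ) : Fin (T + 1) ⊕ Fin T ⊕ Fin T → ℝ →ᵃ[ℝ] ℝ :=
  Sum.elim (Fin.cons (AffineMap.const ℝ ℝ S0) fun _ ↦ AffineMap.const ℝ ℝ Sb)
    (Sum.elim (fun _ ↦ AffineMap.id ℝ ℝ) fun t ↦ AffineMap.const ℝ ℝ (pp t))

lemma feasible_iff_mem_Icc {xb : ℝ} {S : Fin (T + 1) → ℝ} :
    Feasible T pp pm S0 Sb xb S ↔ S 0 = S0 ∧ (∀ t : Fin T, S t.succ ∈ Icc 0 Sb) ∧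
      (∀ t, increment t S ∈ Icc (-xb) xb) ∧ ∀ t, increment t S ∈ Icc (-pm t) (pp t) := by
  simp only [← forall_and, mem_Icc, ← abs_le]
  rfl

lemma mem_polyhedron_dispatch_iff {xb : ℝ} {S : Fin (T + 1) → ℝ} :
    S ∈ polyhedron dispatchForm (dispatchLower pm S0 · xb) (dispatchUpper pp S0 Sb · xb) ↔
      Feasible T pp pm S0 Sb xb S := by
  simp [feasible_iff_mem_Icc, polyhedron, dispatchForm, dispatchLower, dispatchUpper,
    Fin.forall_fin_succ, and_assoc, -mem_Icc]

lemma isCompact_polyhedron_dispatch (pp pm : Fin T → ℝ) (S0 Sb xb : ℝ) :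
    IsCompact
      (polyhedron dispatchForm (dispatchLower pm S0 · xb) (dispatchUpper pp S0 Sb · xb)) :=
  (isCompact_univ_pi fun _ ↦ isCompact_Icc).of_isClosed_subset
    (isClosed_polyhedron (fun i ↦ (dispatchForm i).continuous_of_finiteDimensional) _ _)
    fun _ hS t _ ↦ hS (Sum.inl t)

/-- The paper's `w(x̄)`, the optimal value of the dispatch problem at power capacity `xb`. -/
noncomputable def optimalValue (T : ℕ) (pp pm : Fin T → ℝ) (S0 Sb xb : ℝ) : ℝ :=
  sInf {r : ℝ | ∃ S : Fin (T + 1) → ℝ, Feasible T pp pm S0 Sb xb S ∧ V T S = r}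

lemma feasible_const (hpp : ∀ t, 0 ≤ pp t) (hpm : ∀ t, 0 ≤ pm t) (hS0 : 0 ≤ S0) (hS0' : S0 ≤ Sb) :
    Feasible T pp pm S0 Sb 0 (Function.const _ S0) :=
  ⟨rfl, fun t ↦ by simp [hS0, hS0', hpp t, hpm t]⟩

namespace Feasible

variable {xb yb : ℝ} {S : Fin (T + 1) → ℝ}

lemma mono (hxy : xb ≤ yb) (h : Feasible T pp pm S0 Sb xb S) : Feasible T pp pm S0 Sb yb S :=
  ⟨h.1, fun t ↦ ⟨(h.2 t).1, (h.2 t).2.1.trans hxy, (h.2 t).2.2⟩⟩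

lemma lineMap {S' : Fin (T + 1) → ℝ} (h : Feasible T pp pm S0 Sb xb S)
    (h' : Feasible T pp pm S0 Sb yb S') {r : ℝ} (hr : r ∈ Icc (0 : ℝ) 1) :
    Feasible T pp pm S0 Sb (AffineMap.lineMap xb yb r) (AffineMap.lineMap S S' r) :=
  mem_polyhedron_dispatch_iff.1 <| lineMap_mem_polyhedron
    (mem_polyhedron_dispatch_iff.2 h) (mem_polyhedron_dispatch_iff.2 h') hr

lemma neg_mul_le_V (h : Feasible T pp pm S0 Sb xb S) : -(T * xb) ≤ V T S := by
  have hterm (t : Fin T) : -xb ≤ min 0 (S t.succ - S t.castSucc) :=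
    le_min (neg_nonpos.2 ((abs_nonneg _).trans (h.2 t).2.1)) (neg_le_of_abs_le (h.2 t).2.1)
  simpa [V] using Finset.sum_le_sum fun t (_ : t ∈ Finset.univ) ↦ hterm t

lemma optimalValue_le (h : Feasible T pp pm S0 Sb xb S) :
    optimalValue T pp pm S0 Sb xb ≤ V T S :=
  csInf_le ⟨-(T * xb), by rintro _ ⟨S', h', rfl⟩; exact h'.neg_mul_le_V⟩ ⟨S, h, rfl⟩

lemma le_optimalValue (h : Feasible T pp pm S0 Sb xb S) {r : ℝ}
    (hr : ∀ S', Feasible T pp pm S0 Sb xb S' → r ≤ V T S') :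
    r ≤ optimalValue T pp pm S0 Sb xb :=
  le_csInf ⟨_, S, h, rfl⟩ (by rintro _ ⟨S', h', rfl⟩; exact hr S' h')

end Feasible

lemma lipschitzOnWith_optimalValue (h₀ : Feasible T pp pm S0 Sb 0 (Function.const _ S0)) :
    LipschitzOnWith T (optimalValue T pp pm S0 Sb) (Ici 0) := by
  refine lipschitzOnWith_of_antitoneOn_of_smul_le (fun x hx y _ hxy ↦ ?_) (fun x hx ↦ ?_)
    fun y hy r hr ↦ ?_
  · exact (h₀.mono hx).le_optimalValue fun S hS ↦ (hS.mono hxy).optimalValue_le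
  · exact (h₀.mono hx).le_optimalValue fun S hS ↦ hS.neg_mul_le_V
  · rcases hr.1.eq_or_lt with rfl | hr0
    · simpa [V] using h₀.optimalValue_le
    rw [← div_le_iff₀' hr0]
    refine (h₀.mono hy).le_optimalValue fun S hS ↦ (div_le_iff₀' hr0).2 ?_
    have hcontract := (h₀.lineMap hS hr).optimalValue_le
    rwa [V_lineMap_const S0 S hr0.le, AffineMap.lineMap_apply_ring', sub_zero, add_zero]
      at hcontract

lemma exists_finite_affine_optimalValue
    (h₀ : Feasible T pp pm S0 Sb 0 (Function.const _ S0)) :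
    ∃ F : Set (ℝ →ᵃ[ℝ] ℝ), F.Finite ∧
      ∀ xb ∈ Ici (0 : ℝ), ∃ g ∈ F, optimalValue T pp pm S0 Sb xb = g xb := by
  obtain ⟨F, hF, hleast⟩ := exists_finite_affine_isLeast_image_polyhedron dispatchForm
    (dispatchLower pm S0) (dispatchUpper pp S0 Sb) (continuous_V T) (concaveOn_V T)
    (finite_range fun A : Finset (Fin T) ↦ ∑ t ∈ A, increment t)
    (by simpa using exists_V_eq_sum_increment)
  refine ⟨F, hF, fun xb hxb ↦ ?_⟩
  obtain ⟨g, hg, hmin⟩ := hleast xb (isCompact_polyhedron_dispatch pp pm S0 Sb xb)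
    ⟨_, mem_polyhedron_dispatch_iff.2 (h₀.mono hxb)⟩
  refine ⟨g, hg, ?_⟩
  rw [optimalValue, ← hmin.csInf_eq]
  simp only [image, mem_polyhedron_dispatch_iff]

end Dispatch

/-- Theorem 1 (piecewise linearity and continuity in power capacity): the
optimal value `w(x̄)` is continuous and piecewise affine on `[0, ∞)`. -/
theorem optimalValue_piecewise_affine_power (T : ℕ) (pp pm : Fin T → ℝ)
    (hpp : ∀ t, 0 ≤ pp t) (hpm : ∀ t, 0 ≤ pm t)
    (S0 Sb : ℝ) (hS0 : 0 ≤ S0) (hS0' : S0 ≤ Sb) :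
    ContinuousOn
      (fun xb => sInf {r : ℝ | ∃ S : Fin (T + 1) → ℝ,
        Feasible T pp pm S0 Sb xb S ∧ V T S = r})
      (Set.Ici (0 : ℝ)) ∧
    ∃ (n : ℕ) (a c d : Fin (n + 1) → ℝ),
      a 0 = 0 ∧ StrictMono a ∧
      (∀ i : Fin n, ∀ xb ∈ Set.Icc (a i.castSucc) (a i.succ),
        sInf {r : ℝ | ∃ S : Fin (T + 1) → ℝ,
            Feasible T pp pm S0 Sb xb S ∧ V T S = r} =
          c i.castSucc * xb + d i.castSucc) ∧
      (∀ xb ∈ Set.Ici (a (Fin.last n)),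
        sInf {r : ℝ | ∃ S : Fin (T + 1) → ℝ,
            Feasible T pp pm S0 Sb xb S ∧ V T S = r} =
          c (Fin.last n) * xb + d (Fin.last n)) := by
  have h₀ := feasible_const hpp hpm hS0 hS0'
  have hcont := (lipschitzOnWith_optimalValue h₀).continuousOn
  obtain ⟨F, hF, hval⟩ := exists_finite_affine_optimalValue h₀
  exact ⟨hcont, exists_affine_pieces_of_continuousOn hcont hF hval⟩
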